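/- Let n ≥ 1 and f ∈ LCₙ. Then: (1) for every t > 0 the function x ↦ sup_{z ∈ tB} f(x − z) is integrable on ℝⁿ; (2) for every s > 0 the superlevel set K_s = {f ≥ s} is compact and convex, and the right derivative S(s) := lim_{t→0⁺} (vol(K_s + tB) − vol(K_s))/t exists (with S(s) = 0 when K_s = ∅); and (3) the first quermassintegral W₁(f) = δ(f, 1_B) exists and satisfies W₁(f) = ∫₀^∞ S(s) ds. -/

import Mathlib

open MeasureTheory Filter Set Metric
open scoped Topology NNReal ENNReal Pointwise

noncomputable section

abbrev Euc (n : ℕ) := EuclideanSpace ℝ (Fin n)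

/-- `f` is log-concave: `f((1-λ)x + λy) ≥ f(x)^{1-λ} f(y)^λ`. -/
def IsLogConcaveFn {n : ℕ} (f : Euc n → ℝ) : Prop :=
  ∀ x y : Euc n, ∀ a b : ℝ, 0 ≤ a → 0 ≤ b → a + b = 1 →
    (f x) ^ a * (f y) ^ b ≤ f (a • x + b • y)

/-- The class `LCₙ`. -/
structure MemLC {n : ℕ} (f : Euc n → ℝ) : Prop where
  nonneg : ∀ x, 0 ≤ f x
  usc : UpperSemicontinuous f
  logConcave : IsLogConcaveFn f
  nonzero : ∃ x, 0 < f x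
  tendsto_zero : Tendsto f (cocompact (Euc n)) (𝓝 0)
  support_interior : (interior {x | 0 < f x}).Nonempty

/-- `(f ⋆ (t·1_C))(x) = sup_{z ∈ tC} f(x − z)`. -/
def indSup {n : ℕ} (f : Euc n → ℝ) (C : Set (Euc n)) (t : ℝ) (x : Euc n) : ℝ :=
  ⨆ z ∈ t • C, f (x - z)

/-- The first variation `δ(f, 1_C)` exists and equals `a`. -/
def HasVarInd {n : ℕ} (f : Euc n → ℝ) (C : Set (Euc n)) (a : ℝ) : Prop :=
  Tendsto (fun t : ℝ => ((∫ x, indSup f C t x) - ∫ x, f x) / t)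
    (𝓝[>] (0 : ℝ)) (𝓝 a)

/-- An expanding linear map has determinant of absolute value at least one. -/
lemma one_le_abs_det {n : ℕ} (E : Euc n →ₗ[ℝ] Euc n) (hE : ∀ v, ‖v‖ ≤ ‖E v‖) :
    1 ≤ |LinearMap.det E| := by
  have hinj : Function.Injective E := by
    rw [← LinearMap.ker_eq_bot, LinearMap.ker_eq_bot']
    intro v hv
    have := hE v
    rw [hv, norm_zero] at this
    exact norm_le_zero_iff.1 this
  have hsurj : Function.Surjective E := LinearMap.injective_iff_surjective.1 hinj
  have hsub : ball (0 : Euc n) 1 ⊆ E '' ball 0 1 := by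
    intro y hy
    obtain ⟨x, rfl⟩ := hsurj y
    refine ⟨x, ?_, rfl⟩
    rw [mem_ball_zero_iff] at *
    exact (hE x).trans_lt hy
  have h1 := measure_mono (μ := volume) hsub
  rw [Measure.addHaar_image_linearMap] at h1
  have hpos : (volume (ball (0 : Euc n) 1)) ≠ 0 := (measure_ball_pos _ _ one_pos).ne'
  have hfin : (volume (ball (0 : Euc n) 1)) ≠ ⊤ := measure_ball_lt_top.ne
  have h2 : (1 : ℝ≥0∞) ≤ ENNReal.ofReal |LinearMap.det E| := by
    by_contra hlt
    push Not at hlt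
    have := ENNReal.mul_lt_mul_left hpos hfin hlt
    rw [one_mul] at this
    exact absurd h1 (not_le.2 this)
  simpa using h2

/-- Determinant bound for `lam • id - (lam - 1) • P`. -/
lemma le_abs_det {n : ℕ} (P : Euc n →L[ℝ] Euc n) (hP : ‖P‖ ≤ 1) (u : Euc n) (hu : u ≠ 0)
    (h1 : ∀ v, inner ℝ u (P v) = 0) (h2 : P u = 0) (lam : ℝ) (hlam : 1 ≤ lam) :
    lam ≤ |(lam • ContinuousLinearMap.id ℝ (Euc n) - (lam - 1) • P).det| := by
  set e : Euc n := (‖u‖⁻¹ : ℝ) • u with he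
  have hu' : ‖u‖ ≠ 0 := norm_ne_zero_iff.2 hu
  have hen : ‖e‖ = 1 := by
    rw [he, norm_smul, norm_inv, norm_norm, inv_mul_cancel₀ hu']
  have hee : inner ℝ e e = 1 := by rw [real_inner_self_eq_norm_sq, hen]; norm_num
  have h1' : ∀ v, inner ℝ e (P v) = 0 := fun v => by rw [he, real_inner_smul_left, h1, mul_zero]
  have h2' : P e = 0 := by rw [he, map_smul, h2, smul_zero]
  let φ : Module.Dual ℝ (Euc n) := (innerSL ℝ e).toLinearMap
  have hφ : ∀ v, φ v = inner ℝ e v := fun v => rfl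
  let R : Euc n →ₗ[ℝ] Euc n := LinearMap.transvection φ ((lam - 1) • e)
  let E : Euc n →ₗ[ℝ] Euc n :=
    lam • LinearMap.id - (lam - 1) • (P : Euc n →ₗ[ℝ] Euc n) - (lam - 1) • (φ.smulRight e)
  have hEv : ∀ v, E v = lam • v - (lam - 1) • P v - (lam - 1) • (inner ℝ e v • e) := fun v => rfl
  have hRv : ∀ v, R v = v + inner ℝ e v • ((lam - 1) • e) := fun v => by
    simp [R, LinearMap.transvection.apply, hφ]
  have hER : ((lam • ContinuousLinearMap.id ℝ (Euc n) - (lam - 1) • P : Euc n →L[ℝ] Euc n) :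
      Euc n →ₗ[ℝ] Euc n) = E ∘ₗ R := by
    ext1 v
    have hEe : E e = e := by
      rw [hEv, h2', hee]; simp only [smul_zero, one_smul, sub_zero, ← sub_smul]; simp
    have : (E ∘ₗ R) v = E v + (inner ℝ e v * (lam - 1)) • e := by
      rw [LinearMap.comp_apply, hRv, map_add, map_smul, map_smul, hEe, smul_smul]
    rw [this, hEv]
    simp only [ContinuousLinearMap.toLinearMap_sub, ContinuousLinearMap.toLinearMap_smul, ContinuousLinearMap.coe_id, LinearMap.sub_apply, LinearMap.smul_apply, LinearMap.id_apply, ContinuousLinearMap.coe_coe]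
    rw [smul_smul, mul_comm]
    abel
  have hdetR : LinearMap.det R = lam := by
    have h0 : φ ((lam - 1) • e) = lam - 1 := by
      rw [hφ, inner_smul_right, hee, mul_one]
    simp only [R, LinearMap.transvection.det, h0]
    ring
  have hexp : ∀ v, ‖v‖ ≤ ‖E v‖ := by
    intro v
    have key : ‖v‖ ^ 2 ≤ inner ℝ (E v) v := by
      set a : ℝ := inner ℝ e v with ha
      set w : Euc n := v - a • e with hw
      have hPv : P v = P w := by rw [hw, map_sub, map_smul, h2', smul_zero, sub_zero]
      have hPw : inner ℝ (P v) v = inner ℝ (P w) w := by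
        rw [← hPv, hw, inner_sub_right, inner_smul_right, real_inner_comm, real_inner_comm e, h1', mul_zero, sub_zero, real_inner_comm]
      have hwn : ‖w‖ ^ 2 = ‖v‖ ^ 2 - a ^ 2 := by
        rw [hw, norm_sub_sq_real, inner_smul_right, norm_smul, hen, real_inner_comm, ← ha]
        simp; ring
      have hle : inner ℝ (P w) w ≤ ‖w‖ ^ 2 := by
        calc inner ℝ (P w) w ≤ ‖P w‖ * ‖w‖ := real_inner_le_norm _ _
          _ ≤ (1 * ‖w‖) * ‖w‖ := by
            gcongr
            exact (P.le_opNorm w).trans (by gcongr)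
          _ = ‖w‖ ^ 2 := by ring
      rw [hEv, inner_sub_left, inner_sub_left, real_inner_smul_left, real_inner_smul_left,
        real_inner_smul_left, real_inner_smul_left, ← ha, hPw, real_inner_self_eq_norm_sq]
      nlinarith [mul_le_mul_of_nonneg_left hle (sub_nonneg.2 hlam)]
    have h3 := key.trans (real_inner_le_norm (E v) v)
    by_contra hlt
    push Not at hlt
    have : 0 < ‖v‖ := (norm_nonneg _).trans_lt hlt
    nlinarith
  rw [ContinuousLinearMap.det, hER, LinearMap.det_comp, hdetR, abs_mul,
    abs_of_nonneg (zero_le_one.trans hlam)]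
  nlinarith [one_le_abs_det E hexp]

lemma exists_proj {n : ℕ} {K : Set (Euc n)} (hne : K.Nonempty) (hK : IsCompact K)
    (hc : Convex ℝ K) :
    ∃ p : Euc n → Euc n, (∀ x, p x ∈ K) ∧ ∀ x, ∀ w ∈ K, inner ℝ (x - p x) (w - p x) ≤ 0 := by
  have : ∀ x, ∃ q ∈ K, ∀ w ∈ K, inner ℝ (x - q) (w - q) ≤ 0 := by
    intro x
    obtain ⟨q, hq, h⟩ := exists_norm_eq_iInf_of_complete_convex hne hK.isComplete hc x
    exact ⟨q, hq, (norm_eq_iInf_iff_real_inner_le_zero hc hq).1 h⟩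
  choose p hp h using this
  exact ⟨p, hp, h⟩

lemma vol_shell {n : ℕ} {K : Set (Euc n)} (hK : IsCompact K)
    (hc : Convex ℝ K) (lam t : ℝ) (hlam : 1 ≤ lam) (ht : 0 ≤ t) :
    ENNReal.ofReal lam * volume (cthickening t K \ K) ≤ volume (cthickening (lam * t) K \ K) := by
  rcases K.eq_empty_or_nonempty with rfl | hne
  · simp
  obtain ⟨p, hpK, hp⟩ := exists_proj hne hK hc
  have hfirm : ∀ x y, ‖p x - p y‖ ^ 2 ≤ inner ℝ (x - y) (p x - p y) := by
    intro x y
    have h1 := hp x (p y) (hpK y)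
    have h2 := hp y (p x) (hpK x)
    have h3 : inner ℝ (x - y) (p x - p y) - inner ℝ (p x - p y) (p x - p y)
        = -(inner ℝ (x - p x) (p y - p x) + inner ℝ (y - p y) (p x - p y)) := by
      simp only [inner_sub_left, inner_sub_right]; ring
    rw [real_inner_self_eq_norm_sq] at h3
    linarith
  have hlip' : ∀ x y, ‖p x - p y‖ ≤ ‖x - y‖ := by
    intro x y
    have h3 := (hfirm x y).trans (real_inner_le_norm _ _)
    by_contra hlt
    push Not at hlt
    have : 0 < ‖p x - p y‖ := (norm_nonneg _).trans_lt hlt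
    nlinarith
  have hlip : LipschitzWith 1 p := LipschitzWith.of_dist_le_mul fun x y => by
    rw [dist_eq_norm, dist_eq_norm]; simpa using hlip' x y
  have huniq : ∀ x q, q ∈ K → (∀ w ∈ K, inner ℝ (x - q) (w - q) ≤ 0) → p x = q := by
    intro x q hq h
    have h1 := h _ (hpK x)
    have h2 := hp x q hq
    have h3 : inner ℝ (p x - q) (p x - q)
        = inner ℝ (x - q) (p x - q) + inner ℝ (x - p x) (q - p x) := by
      simp only [inner_sub_left, inner_sub_right]; ring
    rw [real_inner_self_eq_norm_sq] at h3
    have : ‖p x - q‖ ^ 2 ≤ 0 := by linarith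
    have h0 : ‖p x - q‖ = 0 := by nlinarith [norm_nonneg (p x - q)]
    exact sub_eq_zero.1 (norm_eq_zero.1 h0)
  let T : Euc n → Euc n := fun x => lam • x - (lam - 1) • p x
  have hT : ∀ x, T x = lam • x - (lam - 1) • p x := fun x => rfl
  have hTinj : Function.Injective T := by
    intro x y hxy
    have h1 : lam • (x - y) = (lam - 1) • (p x - p y) := by
      have : lam • x - (lam - 1) • p x = lam • y - (lam - 1) • p y := hxy
      rw [smul_sub, smul_sub, sub_eq_sub_iff_add_eq_add]
      rw [sub_eq_sub_iff_add_eq_add] at this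
      rw [this]; abel
    have h2 := congrArg norm h1
    rw [norm_smul, norm_smul, Real.norm_of_nonneg (by linarith),
      Real.norm_of_nonneg (by linarith)] at h2
    have h3 := hlip' x y
    have : ‖x - y‖ = 0 := by nlinarith [norm_nonneg (x - y)]
    exact sub_eq_zero.1 (norm_eq_zero.1 this)
  let A : Set (Euc n) := (cthickening t K \ K) ∩ {x | DifferentiableAt ℝ p x}
  have hAm : MeasurableSet A :=
    (isClosed_cthickening.measurableSet.diff hK.measurableSet).inter
      (measurableSet_of_differentiableAt ℝ p)
  have hAvol : volume A = volume (cthickening t K \ K) := by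
    apply measure_congr
    have := hlip.ae_differentiableAt (μ := volume)
    filter_upwards [this] with x hx
    apply propext
    exact ⟨fun h => h.1, fun h => ⟨h, hx⟩⟩
  have hsub : T '' A ⊆ cthickening (lam * t) K \ K := by
    rintro _ ⟨x, ⟨⟨hxt, hxK⟩, -⟩, rfl⟩
    have hTp : T x - p x = lam • (x - p x) := by
      rw [hT, sub_smul, smul_sub, one_smul]; abel
    constructor
    · rw [hK.cthickening_eq_biUnion_closedBall ht] at hxt
      simp only [mem_iUnion, mem_closedBall, exists_prop] at hxt
      obtain ⟨k, hk, hkx⟩ := hxt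
      have h1 : ‖x - p x‖ ≤ t := by
        have h2 := hp x k hk
        have h3 : ‖x - k‖ ^ 2 = ‖x - p x‖ ^ 2 - 2 * inner ℝ (x - p x) (k - p x) + ‖k - p x‖ ^ 2 := by
          rw [← norm_sub_sq_real]; congr 2; abel
        rw [dist_eq_norm] at hkx
        refine le_trans ?_ hkx
        apply le_of_sq_le_sq _ (norm_nonneg _)
        nlinarith [sq_nonneg ‖k - p x‖]
      refine mem_cthickening_of_dist_le _ (p x) _ _ (hpK x) ?_
      rw [dist_eq_norm, hTp, norm_smul, Real.norm_of_nonneg (by linarith)]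
      gcongr
    · intro hTK
      have h1 := hp x _ hTK
      rw [hTp, inner_smul_right, real_inner_self_eq_norm_sq] at h1
      have h0 : ‖x - p x‖ = 0 := by nlinarith [norm_nonneg (x - p x), sq_nonneg ‖x - p x‖]
      apply hxK
      rw [sub_eq_zero.1 (norm_eq_zero.1 h0)]
      exact hpK x
  have hderiv : ∀ x ∈ A, HasFDerivWithinAt T
      (lam • ContinuousLinearMap.id ℝ (Euc n) - (lam - 1) • fderiv ℝ p x) A x := by
    intro x hx
    have h1 : HasFDerivAt p (fderiv ℝ p x) x := DifferentiableAt.hasFDerivAt hx.2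
    exact (((hasFDerivAt_id x).const_smul lam).sub (h1.const_smul (lam - 1))).hasFDerivWithinAt
  have hdet : ∀ x ∈ A, lam ≤
      |(lam • ContinuousLinearMap.id ℝ (Euc n) - (lam - 1) • fderiv ℝ p x).det| := by
    intro x hx
    have hd : HasFDerivAt p (fderiv ℝ p x) x := DifferentiableAt.hasFDerivAt hx.2
    refine le_abs_det _ (by simpa using hd.le_of_lipschitz hlip) (x - p x) ?_ ?_ ?_ lam hlam
    · intro h
      apply hx.1.2
      rw [sub_eq_zero.1 h]; exact hpK x
    · intro v
      have hg : HasFDerivAt (fun y => inner ℝ (x - p x) (p y))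
          ((innerSL ℝ (x - p x)).comp (fderiv ℝ p x)) x :=
        (innerSL ℝ (x - p x)).hasFDerivAt.comp x hd
      have hmax : IsLocalMax (fun y => inner ℝ (x - p x) (p y)) x := by
        refine Eventually.of_forall fun y => ?_
        have := hp x (p y) (hpK y)
        rw [inner_sub_right] at this
        simpa using this
      have := hmax.hasFDerivAt_eq_zero hg
      have h2 := congrArg (fun L => L v) this
      exact h2
    · have hline : HasDerivAt (fun ε : ℝ => x + ε • (x - p x)) (x - p x) 0 := by
        simpa using ((hasDerivAt_id (0 : ℝ)).smul_const (x - p x)).const_add x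
      have hcomp : HasDerivAt (fun ε : ℝ => p (x + ε • (x - p x))) (fderiv ℝ p x (x - p x)) 0 := by
        refine HasFDerivAt.comp_hasDerivAt (l := p) (0 : ℝ) ?_ hline
        simpa using hd
      have hconst : (fun ε : ℝ => p (x + ε • (x - p x))) =ᶠ[𝓝 0] fun _ => p x := by
        filter_upwards [Ioi_mem_nhds (show (-1 : ℝ) < 0 by norm_num)] with ε hε
        refine huniq _ _ (hpK x) fun w hw => ?_
        have : x + ε • (x - p x) - p x = (1 + ε) • (x - p x) := by
          rw [add_smul, one_smul]; abel
        rw [this, real_inner_smul_left]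
        have hε' : -1 < ε := hε
        exact mul_nonpos_of_nonneg_of_nonpos (by linarith) (hp x w hw)
      exact hcomp.unique ((hasDerivAt_const (0 : ℝ) (p x)).congr_of_eventuallyEq hconst)
  calc ENNReal.ofReal lam * volume (cthickening t K \ K)
      = ∫⁻ _ in A, ENNReal.ofReal lam := by rw [setLIntegral_const, hAvol]
    _ ≤ ∫⁻ x in A, ENNReal.ofReal
          |(lam • ContinuousLinearMap.id ℝ (Euc n) - (lam - 1) • fderiv ℝ p x).det| :=
        setLIntegral_mono' hAm fun x hx => ENNReal.ofReal_le_ofReal (hdet x hx)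
    _ = volume (T '' A) :=
        lintegral_abs_det_fderiv_eq_addHaar_image volume hAm hderiv hTinj.injOn
    _ ≤ _ := measure_mono hsub

lemma MemLC.isCompact_level {n : ℕ} {f : Euc n → ℝ} (hf : MemLC f) {s : ℝ} (hs : 0 < s) :
    IsCompact {x | s ≤ f x} := by
  have hcl : IsClosed {x | s ≤ f x} := hf.usc.isClosed_preimage s
  have h1 : ∀ᶠ x in cocompact (Euc n), f x < s := hf.tendsto_zero.eventually (gt_mem_nhds hs)
  obtain ⟨t, ht, hsub⟩ := mem_cocompact.1 h1
  refine ht.of_isClosed_subset hcl fun x hx => ?_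
  by_contra hxt
  have h2 : f x < s := hsub hxt
  have h3 : s ≤ f x := hx
  linarith

lemma MemLC.convex_level {n : ℕ} {f : Euc n → ℝ} (hf : MemLC f) {s : ℝ} (hs : 0 < s) :
    Convex ℝ {x | s ≤ f x} := by
  intro x hx y hy a b ha hb hab
  have hx' : s ≤ f x := hx
  have hy' : s ≤ f y := hy
  refine le_trans ?_ (hf.logConcave x y a b ha hb hab)
  calc s = s ^ a * s ^ b := by rw [← Real.rpow_add hs, hab, Real.rpow_one]
    _ ≤ f x ^ a * f y ^ b := by
      have := Real.rpow_nonneg (hf.nonneg x) a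
      gcongr

lemma MemLC.exists_bound {n : ℕ} {f : Euc n → ℝ} (hf : MemLC f) : ∃ M, 0 < M ∧ ∀ x, f x ≤ M := by
  obtain ⟨x0, hx0⟩ := hf.nonzero
  obtain ⟨y, hy, hmax⟩ := UpperSemicontinuousOn.exists_isMaxOn (s := {x | f x0 ≤ f x})
    ⟨x0, le_refl (f x0)⟩ (hf.isCompact_level hx0) (hf.usc.upperSemicontinuousOn _)
  have hy' : f x0 ≤ f y := hy
  refine ⟨f y, by linarith, fun x => ?_⟩
  by_cases hx : f x0 ≤ f x
  · exact hmax hx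
  · linarith

lemma MemLC.exists_decay {n : ℕ} {f : Euc n → ℝ} (hf : MemLC f) :
    ∃ C c : ℝ, 0 < C ∧ 0 < c ∧ ∀ x, f x ≤ C * Real.exp (-(c * ‖x‖)) := by
  obtain ⟨M, hM, hfM⟩ := hf.exists_bound
  obtain ⟨x0, hx0⟩ := hf.nonzero
  set m := f x0 with hm
  have hme : 0 < m * Real.exp (-1) := by positivity
  obtain ⟨R0, hR0⟩ := (hf.isCompact_level hme).isBounded.subset_closedBall x0
  set R := max R0 0 + 1 with hR
  have hRpos : 0 < R := by positivity
  have hRR : R0 < R := by have := le_max_left R0 0; linarith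
  have hfar : ∀ y, R ≤ ‖y - x0‖ → f y ≤ m * Real.exp (-1) := by
    intro y hy
    by_contra hlt
    push Not at hlt
    have := hR0 (show y ∈ {x | m * Real.exp (-1) ≤ f x} from hlt.le)
    rw [mem_closedBall, dist_eq_norm] at this
    linarith
  have main : ∀ x, f x ≤ M * Real.exp 1 * Real.exp (-(R⁻¹ * ‖x - x0‖)) := by
    intro x
    rw [mul_assoc, ← Real.exp_add]
    by_cases hx : ‖x - x0‖ < R
    · refine (hfM x).trans (le_mul_of_one_le_right hM.le (Real.one_le_exp ?_))
      have : R⁻¹ * ‖x - x0‖ ≤ 1 := by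
        rw [inv_mul_le_iff₀ hRpos]; linarith
      linarith
    · push Not at hx
      set r := ‖x - x0‖ with hr
      have hrpos : 0 < r := hRpos.trans_le hx
      have hb1 : R / r ≤ 1 := (div_le_one hrpos).2 hx
      have hb0 : 0 < R / r := by positivity
      have h1 := hf.logConcave x0 x (1 - R / r) (R / r) (by linarith) hb0.le (by ring)
      have h2 : f ((1 - R / r) • x0 + (R / r) • x) ≤ m * Real.exp (-1) := by
        apply hfar
        have : (1 - R / r) • x0 + (R / r) • x - x0 = (R / r) • (x - x0) := by
          rw [sub_smul, one_smul, smul_sub]; abel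
        rw [this, norm_smul, Real.norm_of_nonneg hb0.le, ← hr, div_mul_cancel₀ _ hrpos.ne']
      have h3 : m ^ (1 - R / r) * f x ^ (R / r) ≤ m * Real.exp (-1) := h1.trans h2
      have h4 : f x ^ (R / r) ≤ m ^ (R / r) * Real.exp (-1) := by
        have hmp : 0 < m ^ (1 - R / r) := Real.rpow_pos_of_pos hx0 _
        have : m = m ^ (1 - R / r) * m ^ (R / r) := by
          rw [← Real.rpow_add hx0]; simp
        have h5 : m ^ (1 - R / r) * f x ^ (R / r) ≤ m ^ (1 - R / r) * (m ^ (R / r) * Real.exp (-1)) := by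
          rw [← mul_assoc, ← this]; exact h3
        exact le_of_mul_le_mul_left h5 hmp
      have h6 : f x ≤ m * Real.exp (-(R⁻¹ * r)) := by
        have h7 := Real.rpow_le_rpow (Real.rpow_nonneg (hf.nonneg x) _) h4 (show 0 ≤ r / R by positivity)
        have h8 : R / r * (r / R) = 1 := by field_simp
        rw [Real.mul_rpow (Real.rpow_nonneg hx0.le _) (Real.exp_pos _).le, ← Real.rpow_mul (hf.nonneg x), ← Real.rpow_mul hx0.le, h8,
          Real.rpow_one, Real.rpow_one, ← Real.exp_mul] at h7
        convert h7 using 3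
        field_simp
      refine h6.trans ?_
      have : m ≤ M := hfM x0
      gcongr
      linarith
  refine ⟨M * Real.exp 1 * Real.exp (R⁻¹ * ‖x0‖), R⁻¹, by positivity, by positivity, fun x => ?_⟩
  refine (main x).trans ?_
  rw [mul_assoc (M * Real.exp 1), ← Real.exp_add]
  gcongr
  have h1 : ‖x‖ ≤ ‖x - x0‖ + ‖x0‖ := by simpa using norm_add_le (x - x0) x0
  have h2 := mul_le_mul_of_nonneg_left h1 (inv_pos.2 hRpos).le
  linarith

lemma integrable_exp_norm {n : ℕ} {c : ℝ} (hc : 0 < c) :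
    Integrable (fun x : Euc n => Real.exp (-(c * ‖x‖))) := by
  have h0 : Integrable (fun x : Euc n => (1 + ‖x‖) ^ (-((n + 1 : ℕ) : ℝ))) :=
    integrable_one_add_norm (by simp)
  refine (h0.const_mul (Real.exp c * ((n + 1).factorial / c ^ (n + 1)))).mono'
    (by fun_prop) (Eventually.of_forall fun x => ?_)
  rw [Real.norm_of_nonneg (Real.exp_pos _).le, Real.rpow_neg (by positivity), Real.rpow_natCast]
  have hx : 0 < 1 + ‖x‖ := by positivity
  have h1 := Real.pow_div_factorial_le_exp (c * (1 + ‖x‖)) (by positivity) (n + 1)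
  have h2 : Real.exp (-(c * ‖x‖)) = Real.exp c * (Real.exp (c * (1 + ‖x‖)))⁻¹ := by
    rw [← Real.exp_neg, ← Real.exp_add]; congr 1; ring
  rw [h2, mul_assoc]
  gcongr
  refine (inv_anti₀ (by positivity) h1).trans (le_of_eq ?_)
  rw [mul_pow, inv_div, div_mul_eq_div_div]
  rfl

lemma ball_smul {n : ℕ} {t : ℝ} (ht : 0 ≤ t) :
    t • closedBall (0 : Euc n) 1 = closedBall 0 t := by
  rw [smul_unitClosedBall, Real.norm_of_nonneg ht]

lemma MemLC.exists_indSup {n : ℕ} {f : Euc n → ℝ} (hf : MemLC f) {t : ℝ} (ht : 0 ≤ t) (x : Euc n) :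
    (∀ z ∈ closedBall (0 : Euc n) t, f (x - z) ≤ indSup f (closedBall 0 1) t x) ∧
    ∃ z ∈ closedBall (0 : Euc n) t, indSup f (closedBall 0 1) t x = f (x - z) := by
  obtain ⟨M, hM, hfM⟩ := hf.exists_bound
  have hle : ∀ z ∈ closedBall (0 : Euc n) t, f (x - z) ≤ indSup f (closedBall 0 1) t x := by
    intro z hz
    rw [indSup, ball_smul ht]
    refine le_ciSup₂ (f := fun z (_ : z ∈ closedBall (0 : Euc n) t) => f (x - z)) ?_ z hz
    refine ⟨M, ?_⟩
    rintro _ ⟨_, ⟨i, rfl⟩, ⟨h, rfl⟩⟩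
    exact hfM _
  refine ⟨hle, ?_⟩
  have husc : UpperSemicontinuous fun z => f (x - z) :=
    fun z y hy => (continuous_const.sub continuous_id).continuousAt.eventually (hf.usc (x - z) y hy)
  obtain ⟨z, hz, hmax⟩ := UpperSemicontinuousOn.exists_isMaxOn (s := closedBall (0 : Euc n) t)
    ⟨0, by simpa using ht⟩ (isCompact_closedBall _ _) (husc.upperSemicontinuousOn _)
  refine ⟨z, hz, le_antisymm ?_ (hle z hz)⟩
  rw [indSup, ball_smul ht]
  exact Real.iSup_le (fun y => Real.iSup_le (fun hy => hmax hy) (hf.nonneg _)) (hf.nonneg _)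

lemma MemLC.level_indSup {n : ℕ} {f : Euc n → ℝ} (hf : MemLC f) {s t : ℝ} (hs : 0 < s)
    (ht : 0 ≤ t) :
    {x | s ≤ indSup f (closedBall 0 1) t x} = cthickening t {x | s ≤ f x} := by
  rw [← (hf.isCompact_level hs).add_closedBall_zero ht]
  ext x
  obtain ⟨h1, z, hz, h2⟩ := hf.exists_indSup ht x
  constructor
  · intro hx
    refine Set.mem_add.2 ⟨x - z, ?_, z, hz, by simp⟩
    have : s ≤ indSup f (closedBall 0 1) t x := hx
    rwa [h2] at this
  · intro hx
    obtain ⟨y, hy, w, hw, rfl⟩ := Set.mem_add.1 hx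
    have h3 := h1 w hw
    rw [add_sub_cancel_right] at h3
    exact le_trans hy h3

lemma MemLC.integrable_indSup {n : ℕ} {f : Euc n → ℝ} (hf : MemLC f) {t : ℝ} (ht : 0 ≤ t) :
    Integrable (indSup f (closedBall (0 : Euc n) 1) t) := by
  have hnn : ∀ x, 0 ≤ indSup f (closedBall (0 : Euc n) 1) t x := fun x => by
    obtain ⟨-, z, -, h⟩ := hf.exists_indSup ht x
    rw [h]; exact hf.nonneg _
  have hmeas : Measurable (indSup f (closedBall (0 : Euc n) 1) t) := by
    refine measurable_of_Ici fun s => ?_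
    by_cases hs : 0 < s
    · have := hf.level_indSup hs ht
      change MeasurableSet {x | s ≤ indSup f (closedBall 0 1) t x}
      rw [this]
      exact isClosed_cthickening.measurableSet
    · convert MeasurableSet.univ
      ext x
      simp only [mem_preimage, mem_Ici, mem_univ, iff_true]
      exact (not_lt.1 hs).trans (hnn x)
  obtain ⟨C, c, hC, hc, h⟩ := hf.exists_decay
  refine ((integrable_exp_norm (n := n) hc).const_mul (C * Real.exp (c * t))).mono'
    hmeas.aestronglyMeasurable (Eventually.of_forall fun x => ?_)
  rw [Real.norm_of_nonneg (hnn x)]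
  obtain ⟨-, z, hz, h2⟩ := hf.exists_indSup ht x
  rw [h2, mul_assoc, ← Real.exp_add]
  refine (h _).trans ?_
  rw [mem_closedBall_zero_iff] at hz
  have h3 : ‖x‖ ≤ ‖x - z‖ + t := by
    have := norm_add_le (x - z) z
    rw [sub_add_cancel] at this
    linarith
  gcongr
  nlinarith

lemma MemLC.integrable_vol {n : ℕ} {f : Euc n → ℝ} (hf : MemLC f) {t : ℝ} (ht : 0 ≤ t) :
    IntegrableOn (fun s => (volume (cthickening t {x | s ≤ f x})).toReal) (Ioi 0) ∧
    ∫ x, indSup f (closedBall 0 1) t x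
      = ∫ s in Ioi 0, (volume (cthickening t {x | s ≤ f x})).toReal := by
  have hint := hf.integrable_indSup ht
  have hnn : 0 ≤ᵐ[volume] indSup f (closedBall (0 : Euc n) 1) t := Eventually.of_forall fun x => by
    obtain ⟨-, z, -, h⟩ := hf.exists_indSup ht x
    rw [h]; exact hf.nonneg _
  have hfin : ∀ s ∈ Ioi (0 : ℝ), volume (cthickening t {x | s ≤ f x}) ≠ ⊤ := fun s hs =>
    (hf.isCompact_level hs).cthickening.measure_lt_top.ne
  constructor
  · have hanti : Antitone fun s => volume (cthickening t {x | s ≤ f x}) := by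
      intro a b hab
      exact measure_mono (cthickening_subset_of_subset _ fun x hx => le_trans hab hx)
    refine integrable_toReal_of_lintegral_ne_top hanti.measurable.aemeasurable ?_
    have h1 := lintegral_eq_lintegral_meas_le volume hnn hint.aemeasurable
    have h2 : ∫⁻ s in Ioi 0, volume {x | s ≤ indSup f (closedBall 0 1) t x}
        = ∫⁻ s in Ioi 0, volume (cthickening t {x | s ≤ f x}) :=
      setLIntegral_congr_fun measurableSet_Ioi fun s hs => by
        simp only [hf.level_indSup hs ht]
    rw [← h2, ← h1]
    exact hint.lintegral_lt_top.ne
  · rw [hint.integral_eq_integral_meas_le hnn]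
    refine setIntegral_congr_fun measurableSet_Ioi fun s hs => ?_
    simp only [hf.level_indSup hs ht, Measure.real]

lemma quot_mono {n : ℕ} {K : Set (Euc n)} (hK : IsCompact K) (hc : Convex ℝ K) :
    MonotoneOn (fun t : ℝ => ((volume (cthickening t K)).toReal - (volume K).toReal) / t)
      (Ioi 0) := by
  have hdiff : ∀ t : ℝ, 0 < t → (volume (cthickening t K)).toReal - (volume K).toReal
      = (volume (cthickening t K \ K)).toReal := by
    intro t ht
    rw [measure_sdiff (self_subset_cthickening K) hK.measurableSet.nullMeasurableSet
      hK.measure_lt_top.ne, ENNReal.toReal_sub_of_le (measure_mono (self_subset_cthickening K))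
        hK.cthickening.measure_lt_top.ne]
  intro a ha b hb hab
  have ha' : 0 < a := ha
  have hb' : 0 < b := hb
  simp only [hdiff a ha, hdiff b hb]
  have h1 := vol_shell hK hc (b / a) a ((one_le_div ha').2 hab) ha'.le
  rw [div_mul_cancel₀ _ ha'.ne'] at h1
  have h2 := ENNReal.toReal_mono ((measure_mono sdiff_subset).trans_lt
    hK.cthickening.measure_lt_top).ne h1
  rw [ENNReal.toReal_mul, ENNReal.toReal_ofReal (by positivity)] at h2
  rw [div_le_div_iff₀ ha' hb']
  rw [div_mul_eq_mul_div, div_le_iff₀ ha'] at h2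
  linarith

lemma quot_nonneg {n : ℕ} {K : Set (Euc n)} (hK : IsCompact K) {t : ℝ} (ht : 0 < t) :
    0 ≤ ((volume (cthickening t K)).toReal - (volume K).toReal) / t :=
  div_nonneg (sub_nonneg.2 (ENNReal.toReal_mono hK.cthickening.measure_lt_top.ne
    (measure_mono (self_subset_cthickening K)))) ht.le

theorem stmt4 {n : ℕ} (hn : 1 ≤ n) (f : Euc n → ℝ) (hf : MemLC f) :
    (∀ t : ℝ, 0 < t → Integrable (indSup f (closedBall (0 : Euc n) 1) t)) ∧
    (∀ s : ℝ, 0 < s → IsCompact {x | s ≤ f x} ∧ Convex ℝ {x | s ≤ f x}) ∧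
    ∃ S : ℝ → ℝ,
      (∀ s : ℝ, 0 < s →
        Tendsto (fun t : ℝ =>
            ((volume ({x | s ≤ f x} + t • closedBall (0 : Euc n) 1)).toReal
              - (volume {x | s ≤ f x}).toReal) / t)
          (𝓝[>] (0 : ℝ)) (𝓝 (S s))) ∧
      ∃ w : ℝ, HasVarInd f (closedBall (0 : Euc n) 1) w ∧
        w = ∫ s in Ioi (0 : ℝ), S s := by
  refine ⟨fun t ht => hf.integrable_indSup ht.le,
    fun s hs => ⟨hf.isCompact_level hs, hf.convex_level hs⟩, ?_⟩
  let Q : ℝ → ℝ → ℝ := fun t s =>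
    ((volume (cthickening t {x | s ≤ f x})).toReal - (volume {x | s ≤ f x}).toReal) / t
  have hQ : ∀ s : ℝ, 0 < s →
      Tendsto (fun t => Q t s) (𝓝[>] (0 : ℝ)) (𝓝 (sInf ((fun t => Q t s) '' Ioi 0))) := by
    intro s hs
    refine (quot_mono (hf.isCompact_level hs) (hf.convex_level hs)).tendsto_nhdsGT ⟨0, ?_⟩
    rintro _ ⟨t, ht, rfl⟩
    exact quot_nonneg (hf.isCompact_level hs) ht
  have hV0 : ∀ s : ℝ, 0 < s → volume (cthickening 0 {x | s ≤ f x}) = volume {x | s ≤ f x} := by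
    intro s hs
    rw [cthickening_zero, (hf.isCompact_level hs).isClosed.closure_eq]
  have h0 := hf.integrable_vol le_rfl
  have hK0 : IntegrableOn (fun s => (volume {x | s ≤ f x}).toReal) (Ioi 0) :=
    h0.1.congr_fun (fun s hs => by simp only [hV0 s hs]) measurableSet_Ioi
  have hJ : ∫ x, f x = ∫ s in Ioi 0, (volume {x | s ≤ f x}).toReal := by
    have h1 : indSup f (closedBall (0 : Euc n) 1) 0 = f := by
      ext x
      obtain ⟨-, z, hz, h⟩ := hf.exists_indSup le_rfl x
      have hz0 : z = 0 := by simpa using hz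
      rw [h, hz0, sub_zero]
    have h2 := h0.2
    rw [h1] at h2
    rw [h2]
    exact setIntegral_congr_fun measurableSet_Ioi fun s hs => by simp only [hV0 s hs]
  have hQint : ∀ t : ℝ, 0 < t → IntegrableOn (Q t) (Ioi 0) := fun t ht =>
    ((hf.integrable_vol ht.le).1.sub hK0).div_const t
  refine ⟨fun s => sInf ((fun t => Q t s) '' Ioi 0), fun s hs => ?_, _, ?_, rfl⟩
  · refine (hQ s hs).congr' ?_
    filter_upwards [self_mem_nhdsWithin] with t ht
    have ht' : 0 < t := ht
    rw [ball_smul ht'.le, (hf.isCompact_level hs).add_closedBall_zero ht'.le]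
  · have hlim : Tendsto (fun t => ∫ s in Ioi (0 : ℝ), Q t s) (𝓝[>] (0 : ℝ))
        (𝓝 (∫ s in Ioi (0 : ℝ), sInf ((fun t => Q t s) '' Ioi 0))) := by
      refine tendsto_integral_filter_of_dominated_convergence (Q 1) ?_ ?_ (hQint 1 one_pos) ?_
      · filter_upwards [self_mem_nhdsWithin] with t ht
        exact (hQint t ht).aestronglyMeasurable
      · filter_upwards [Ioo_mem_nhdsGT (show (0 : ℝ) < 1 from one_pos)] with t ht
        refine (ae_restrict_iff' measurableSet_Ioi).2 (Eventually.of_forall fun s hs => ?_)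
        rw [Real.norm_of_nonneg (quot_nonneg (hf.isCompact_level hs) ht.1)]
        exact quot_mono (hf.isCompact_level hs) (hf.convex_level hs) ht.1
          (mem_Ioi.2 one_pos) ht.2.le
      · exact (ae_restrict_iff' measurableSet_Ioi).2 (Eventually.of_forall fun s hs => hQ s hs)
    refine hlim.congr' ?_
    filter_upwards [self_mem_nhdsWithin] with t ht
    have ht' : 0 < t := ht
    obtain ⟨h1, h2⟩ := hf.integrable_vol ht'.le
    rw [h2, hJ, ← integral_sub h1 hK0, ← integral_div]

end
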